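/- In any triangle in ℝ^d whose largest angle is less than π/3 + c where 0 < c < 0.024, the ratio of the smallest side to the largest side exceeds sin(π/3 - 2c)/sin(π/3 + c), which is at least 1 - 1.744c. -/

import Mathlib

/-!
Write `k` for the circumdiameter of the triangle. Each side is `k` times the sine of the opposite
angle. If every angle is smaller than `θ ≤ π / 2`, then every angle lies in `(π - 2 * θ, θ)`, so
every side lies between `k * sin (2 * θ)` and `k * sin θ`, and the ratio of these two bounds is
`2 * cos θ`. For `θ = π / 3 + c` this is `cos c - √3 * sin c`. The constant `1.744` exceeds `√3` by
slightly less than `0.024 / 2`, so the quadratic Taylor term of the cosine is not quite absorbed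
at `c = 0.024` and the cubic term of the sine has to be kept.
-/

open Real Set
open scoped EuclideanGeometry

section MinMax

variable {K : Type*} [Field K] [LinearOrder K] [IsStrictOrderedRing K]

theorem div_lt_min_div_max {s t x y z : K} (hs : 0 ≤ s) (hx : x ∈ Ioo s t) (hy : y ∈ Ioo s t)
    (hz : z ∈ Ioo s t) : s / t < min x (min y z) / max x (max y z) := by
  have hmin : s < min x (min y z) := lt_min hx.1 (lt_min hy.1 hz.1)
  have hmax : max x (max y z) < t := max_lt hx.2 (max_lt hy.2 hz.2)
  have hpos : 0 < max x (max y z) := (hs.trans_lt hx.1).trans_le (le_max_left _ _)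
  exact div_lt_div₀' hmin.le hmax (hs.trans_lt hmin) hpos

end MinMax

theorem sin_pi_sub_two_mul_div_sin {θ : ℝ} (hθ : sin θ ≠ 0) :
    sin (π - 2 * θ) / sin θ = 2 * cos θ := by
  rw [sin_pi_sub, sin_two_mul]
  field_simp

theorem sin_mem_Ioo_of_mem_Ioo_pi_sub_two_mul {θ x : ℝ} (hθ : θ ≤ π / 2)
    (hx : x ∈ Ioo (π - 2 * θ) θ) : sin x ∈ Ioo (sin (π - 2 * θ)) (sin θ) :=
  ⟨sin_lt_sin_of_lt_of_le_pi_div_two (by linarith [pi_pos]) (hx.2.le.trans hθ) hx.1,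
    sin_lt_sin_of_lt_of_le_pi_div_two (by linarith [hx.1, pi_pos]) hθ hx.2⟩

theorem two_mul_cos_pi_div_three_add (c : ℝ) : 2 * cos (π / 3 + c) = cos c - √3 * sin c := by
  rw [cos_add, cos_pi_div_three, sin_pi_div_three]
  ring

theorem sin_le_sub_cube_add_pow_five {x : ℝ} (hx₀ : 0 ≤ x) (hx₁ : x ≤ 1) :
    sin x ≤ x - x ^ 3 / 6 + x ^ 5 / 100 := by
  have hbound := sin_bound (abs_le.2 ⟨by linarith, hx₁⟩)
  rw [abs_of_nonneg hx₀] at hbound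
  linarith [(abs_le.1 hbound).2]

theorem one_sub_mul_le_two_mul_cos_pi_div_three_add {c : ℝ} (hc₀ : 0 ≤ c) (hc₁ : c ≤ 0.024) :
    1 - 1.744 * c ≤ 2 * cos (π / 3 + c) := by
  norm_num1 at hc₁ ⊢
  have hsqrt : √3 ≤ 1.7321 := sqrt_le_iff.2 (by norm_num)
  have hsin_nonneg : 0 ≤ sin c := sin_nonneg_of_nonneg_of_le_pi hc₀ (by linarith [pi_gt_three])
  have hpoly : 0 ≤ 1.744 - 1.7321 - c / 2 + 1.7321 * (c ^ 2 / 6 - c ^ 4 / 100) := by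
    norm_num1
    nlinarith [pow_nonneg hc₀ 2, pow_le_pow_left₀ hc₀ hc₁ 2]
  have hsin : √3 * sin c ≤ 1.744 * c - c ^ 2 / 2 :=
    calc √3 * sin c ≤ 1.7321 * (c - c ^ 3 / 6 + c ^ 5 / 100) :=
          mul_le_mul hsqrt (sin_le_sub_cube_add_pow_five hc₀ (by linarith)) hsin_nonneg
            (by norm_num1)
      _ = 1.744 * c - c ^ 2 / 2 -
          c * (1.744 - 1.7321 - c / 2 + 1.7321 * (c ^ 2 / 6 - c ^ 4 / 100)) := by ring
      _ ≤ 1.744 * c - c ^ 2 / 2 := sub_le_self _ (mul_nonneg hc₀ hpoly)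
  rw [two_mul_cos_pi_div_three_add]
  linarith [one_sub_sq_div_two_le_cos (x := c)]

section Triangle

variable {V P : Type*} [NormedAddCommGroup V] [InnerProductSpace ℝ V] [MetricSpace P]
  [NormedAddTorsor V P] {A B C : P}

theorem angle_add_angle_add_angle_eq_pi_of_not_collinear (h : ¬Collinear ℝ {A, B, C}) :
    ∠ B A C + ∠ A B C + ∠ A C B = π := by
  have hsum := EuclideanGeometry.angle_add_angle_add_angle_eq_pi C (ne₁₂_of_not_collinear h).symm
  rw [EuclideanGeometry.angle_comm B C A, EuclideanGeometry.angle_comm C A B] at hsum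
  linarith

theorem exists_dist_eq_mul_sin_angle (h : ¬Collinear ℝ {A, B, C}) :
    ∃ k > 0, dist A B = k * sin (∠ A C B) ∧ dist B C = k * sin (∠ B A C) ∧
      dist A C = k * sin (∠ A B C) := by
  let t : Affine.Triangle ℝ P := ⟨![A, B, C], affineIndependent_iff_not_collinear_set.2 h⟩
  have dist_eq : ∀ i j l, i ≠ j → i ≠ l → j ≠ l → dist (t.points i) (t.points l) =
      2 * t.circumradius * sin (∠ (t.points i) (t.points j) (t.points l)) := by
    intro i j l hij hil hjl
    rw [← t.dist_div_sin_angle_eq_two_mul_circumradius hij hil hjl, div_mul_cancel₀]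
    apply EuclideanGeometry.sin_ne_zero_of_not_collinear
    exact (affineIndependent_iff_not_collinear_of_ne hij hil hjl).1 t.independent
  exact ⟨2 * t.circumradius, mul_pos two_pos t.circumradius_pos,
    dist_eq 0 2 1 (by decide) (by decide) (by decide),
    dist_eq 1 0 2 (by decide) (by decide) (by decide),
    dist_eq 0 1 2 (by decide) (by decide) (by decide)⟩

theorem two_mul_cos_lt_min_dist_div_max_dist (h : ¬Collinear ℝ {A, B, C}) {θ : ℝ} (hθ : θ ≤ π)
    (hA : ∠ B A C < θ) (hB : ∠ A B C < θ) (hC : ∠ A C B < θ) :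
    2 * cos θ <
      min (dist A B) (min (dist B C) (dist A C)) / max (dist A B) (max (dist B C) (dist A C)) := by
  obtain ⟨k, hk, hAB, hBC, hAC⟩ := exists_dist_eq_mul_sin_angle h
  have hsum := angle_add_angle_add_angle_eq_pi_of_not_collinear h
  rcases le_total θ (π / 2) with hacute | hobtuse
  · have side_mem : ∀ φ ∈ Ioo (π - 2 * θ) θ,
        k * sin φ ∈ Ioo (k * sin (π - 2 * θ)) (k * sin θ) := fun φ hφ =>
      (sin_mem_Ioo_of_mem_Ioo_pi_sub_two_mul hacute hφ).imp
        (mul_lt_mul_of_pos_left · hk) (mul_lt_mul_of_pos_left · hk)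
    have hsin : 0 < sin θ :=
      sin_pos_of_pos_of_lt_pi (by linarith [pi_pos]) (by linarith [pi_pos])
    have hsin_two_mul : 0 ≤ sin (π - 2 * θ) :=
      sin_nonneg_of_nonneg_of_le_pi (by linarith) (by linarith)
    rw [← sin_pi_sub_two_mul_div_sin hsin.ne', ← mul_div_mul_left _ _ hk.ne', hAB, hBC, hAC]
    exact div_lt_min_div_max (mul_nonneg hk.le hsin_two_mul) (side_mem _ ⟨by linarith, hC⟩)
      (side_mem _ ⟨by linarith, hA⟩) (side_mem _ ⟨by linarith, hB⟩)
  · have hcos : cos θ ≤ 0 := cos_nonpos_of_pi_div_two_le_of_le hobtuse (by linarith [pi_pos])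
    have hABpos : 0 < dist A B := dist_pos.2 (ne₁₂_of_not_collinear h)
    have hBCpos : 0 < dist B C := dist_pos.2 (ne₂₃_of_not_collinear h)
    have hACpos : 0 < dist A C := dist_pos.2 (ne₁₃_of_not_collinear h)
    have hratio : 0 < min (dist A B) (min (dist B C) (dist A C)) /
        max (dist A B) (max (dist B C) (dist A C)) := by positivity
    linarith

theorem stmt11_general (h : ¬Collinear ℝ {A, B, C}) {c : ℝ} (hc : c < 2 * π / 3)
    (hA : ∠ B A C < π / 3 + c) (hB : ∠ A B C < π / 3 + c) (hC : ∠ A C B < π / 3 + c) :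
    sin (π / 3 - 2 * c) / sin (π / 3 + c) <
        min (dist A B) (min (dist B C) (dist A C)) / max (dist A B) (max (dist B C) (dist A C)) ∧
      (c ≤ 0.024 → 1 - 1.744 * c ≤ sin (π / 3 - 2 * c) / sin (π / 3 + c)) := by
  have hc₀ : 0 < c := by linarith [angle_add_angle_add_angle_eq_pi_of_not_collinear h]
  have hsin : 0 < sin (π / 3 + c) :=
    sin_pos_of_pos_of_lt_pi (by linarith [pi_pos]) (by linarith)
  rw [show π / 3 - 2 * c = π - 2 * (π / 3 + c) by ring, sin_pi_sub_two_mul_div_sin hsin.ne']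
  exact ⟨two_mul_cos_lt_min_dist_div_max_dist h (by linarith) hA hB hC,
    one_sub_mul_le_two_mul_cos_pi_div_three_add hc₀.le⟩

end Triangle

theorem stmt11 (d : ℕ) (A B C : EuclideanSpace ℝ (Fin d))
    (hnd : ¬ Collinear ℝ ({A, B, C} : Set (EuclideanSpace ℝ (Fin d))))
    (c : ℝ) (hc : 0 < c) (hc' : c < 0.024)
    (hA : EuclideanGeometry.angle B A C < Real.pi / 3 + c)
    (hB : EuclideanGeometry.angle A B C < Real.pi / 3 + c)
    (hC : EuclideanGeometry.angle A C B < Real.pi / 3 + c) :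
    min (dist A B) (min (dist B C) (dist A C)) / max (dist A B) (max (dist B C) (dist A C)) >
        Real.sin (Real.pi / 3 - 2 * c) / Real.sin (Real.pi / 3 + c) ∧
      Real.sin (Real.pi / 3 - 2 * c) / Real.sin (Real.pi / 3 + c) ≥ 1 - 1.744 * c := by
  have hc_lt : c < 2 * π / 3 := by norm_num at hc'; linarith [pi_gt_three]
  exact (stmt11_general hnd hc_lt hA hB hC).imp_right fun hratio => hratio hc'.le
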